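/- Let ε, μ > 0 be constants, let ω ⊆ ℝ³ be open, let φ_b, φ_t : ω → ℝ be twice continuously differentiable with φ_b(x) < φ_t(x) for all x ∈ ω, and set φ(x,t̂) = (1−t̂)φ_b(x)+t̂φ_t(x), δ = φ_t − φ_b, Φ(x,t̂) = (x, φ(x,t̂)). Suppose u = (E,H) : K° → ℝ⁶ is continuously differentiable and solves the Maxwell system ∂ₜ(εE) = ∇×H, ∂ₜ(μH) = −∇×E on the open tent K° = {(x,t) : x ∈ ω, φ_b(x) < t < φ_t(x)}. Then û = u ∘ Φ satisfies the transformed equation ∂_{t̂}( g(û) − f(û)∇_xφ ) + div_x( δ f(û) ) = 0 on ω × (0,1), where g(û) = (εÊ, μĤ), f(û) ∈ ℝ^{6×3} has upper block −skew Ĥ and lower block skew Ê, f(û)∇_xφ denotes the matrix–vector product, and div_x is the row-wise spatial divergence. -/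

import Mathlib

/-- Partial derivative in direction `j` of a scalar field on `ℝ³`. -/
noncomputable def pd3 (j : Fin 3) (f : (Fin 3 → ℝ) → ℝ) (x : Fin 3 → ℝ) : ℝ :=
  fderiv ℝ f x (Pi.single j 1)

/-- The skew matrix of a vector `v ∈ ℝ³`, with rows `(0, v₃, −v₂)`, `(−v₃, 0, v₁)`,
`(v₂, −v₁, 0)`. -/
def skew3 (v : Fin 3 → ℝ) : Matrix (Fin 3) (Fin 3) ℝ :=
  !![0, v 2, -(v 1); -(v 2), 0, v 0; v 1, -(v 0), 0]

/-- The curl of a vector field on `ℝ³`. -/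
noncomputable def curl3 (E : (Fin 3 → ℝ) → (Fin 3 → ℝ)) (x : Fin 3 → ℝ) : Fin 3 → ℝ :=
  ![pd3 1 (fun y => E y 2) x - pd3 2 (fun y => E y 1) x,
    pd3 2 (fun y => E y 0) x - pd3 0 (fun y => E y 2) x,
    pd3 0 (fun y => E y 1) x - pd3 1 (fun y => E y 0) x]

/-- For `u = (E, H)`, the vector `g(u) = (εE, μH) ∈ ℝ⁶`. -/
def gvec (ε μ : ℝ) (E H : Fin 3 → ℝ) : Fin 6 → ℝ :=
  Fin.append (fun i => ε * E i) (fun i => μ * H i)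

/-- For `u = (E, H)`, the `6 × 3` matrix `f(u)` with upper block `−skew H` and lower
block `skew E`. -/
def fmat (E H : Fin 3 → ℝ) : Fin 6 → Fin 3 → ℝ :=
  Fin.append (fun i j => -(skew3 H i j)) (fun i j => skew3 E i j)

/-- The interpolated front `φ(x, t̂) = (1 − t̂) φ_b(x) + t̂ φ_t(x)`. -/
def tentPhi (φb φt : (Fin 3 → ℝ) → ℝ) (x : Fin 3 → ℝ) (t : ℝ) : ℝ :=
  (1 - t) * φb x + t * φt x

/-- The scalar chain-rule computation behind the mapped tent equation. -/
lemma scalar_mapped_tent (φb φt : (Fin 3 → ℝ) → ℝ) (x : Fin 3 → ℝ) (t : ℝ)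
    (hb : DifferentiableAt ℝ φb x) (ht : DifferentiableAt ℝ φt x)
    (G : (Fin 3 → ℝ) × ℝ → ℝ) (F : Fin 3 → (Fin 3 → ℝ) × ℝ → ℝ)
    (hG : DifferentiableAt ℝ G (x, tentPhi φb φt x t))
    (hF : ∀ j, DifferentiableAt ℝ (F j) (x, tentPhi φb φt x t)) :
    deriv (fun s => G (x, tentPhi φb φt x s) - ∑ j : Fin 3, F j (x, tentPhi φb φt x s)
        * fderiv ℝ (fun y => tentPhi φb φt y s) x (Pi.single j 1)) t
      + ∑ j : Fin 3, pd3 j (fun y => (φt y - φb y) * F j (y, tentPhi φb φt y t)) x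
    = (φt x - φb x) * (deriv (fun s => G (x, s)) (tentPhi φb φt x t)
        + ∑ j : Fin 3, pd3 j (fun y => F j (y, tentPhi φb φt x t)) x) := by
  have hφ : ∀ s, HasFDerivAt (fun y => tentPhi φb φt y s)
      ((1 - s) • fderiv ℝ φb x + s • fderiv ℝ φt x) x := fun s =>
    (hb.hasFDerivAt.const_mul (1 - s)).add (ht.hasFDerivAt.const_mul s)
  have hφs : HasDerivAt (fun s => tentPhi φb φt x s) (φt x - φb x) t := by
    have h := (((hasDerivAt_id t).const_sub 1).mul_const (φb x)).add
      ((hasDerivAt_id t).mul_const (φt x))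
    exact h.congr_deriv (by ring)
  have hgs : ∀ j : Fin 3, HasDerivAt
      (fun s => fderiv ℝ (fun y => tentPhi φb φt y s) x (Pi.single j 1))
      (fderiv ℝ φt x (Pi.single j 1) - fderiv ℝ φb x (Pi.single j 1)) t := by
    intro j
    have h := (((hasDerivAt_id t).const_sub 1).mul_const (fderiv ℝ φb x (Pi.single j 1))).add
      ((hasDerivAt_id t).mul_const (fderiv ℝ φt x (Pi.single j 1)))
    have e : (fun s => fderiv ℝ (fun y => tentPhi φb φt y s) x (Pi.single j 1)) =
        (fun s => (1 - s) * fderiv ℝ φb x (Pi.single j 1)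
          + s * fderiv ℝ φt x (Pi.single j 1)) := by
      funext s
      rw [(hφ s).fderiv]
      simp
    rw [e]
    exact h.congr_deriv (by ring)
  have hcomp : ∀ K : (Fin 3 → ℝ) × ℝ → ℝ, DifferentiableAt ℝ K (x, tentPhi φb φt x t) →
      HasDerivAt (fun s => K (x, tentPhi φb φt x s))
        ((φt x - φb x) * fderiv ℝ K (x, tentPhi φb φt x t) (0, 1)) t := by
    intro K hK
    have h := hK.hasFDerivAt.comp_hasDerivAt (f := fun s => (x, tentPhi φb φt x s)) t
      ((hasDerivAt_const t x).prodMk hφs)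
    refine h.congr_deriv ?_
    rw [← smul_eq_mul, ← map_smul]
    simp
  have htime : deriv (fun s => G (x, s)) (tentPhi φb φt x t)
      = fderiv ℝ G (x, tentPhi φb φt x t) (0, 1) := by
    have h := hG.hasFDerivAt.comp_hasDerivAt (f := fun s => (x, s)) (tentPhi φb φt x t)
      ((hasDerivAt_const _ x).prodMk (hasDerivAt_id _))
    exact h.deriv
  have hspace : ∀ j, pd3 j (fun y => F j (y, tentPhi φb φt x t)) x
      = fderiv ℝ (F j) (x, tentPhi φb φt x t) (Pi.single j 1, 0) := by
    intro j
    have h := (hF j).hasFDerivAt.comp (f := fun y => (y, tentPhi φb φt x t)) x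
      ((hasFDerivAt_id x).prodMk (hasFDerivAt_const _ x))
    have h2 := h.fderiv
    simp only [Function.comp_def] at h2
    rw [pd3, h2]
    simp
  have hdiv : ∀ j, pd3 j (fun y => (φt y - φb y) * F j (y, tentPhi φb φt y t)) x
      = (φt x - φb x) * (fderiv ℝ (F j) (x, tentPhi φb φt x t) (Pi.single j 1, 0)
          + fderiv ℝ (fun y => tentPhi φb φt y t) x (Pi.single j 1)
            * fderiv ℝ (F j) (x, tentPhi φb φt x t) (0, 1))
        + F j (x, tentPhi φb φt x t)
          * (fderiv ℝ φt x (Pi.single j 1) - fderiv ℝ φb x (Pi.single j 1)) := by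
    intro j
    have h := (hF j).hasFDerivAt.comp (f := fun y => (y, tentPhi φb φt y t)) x
      ((hasFDerivAt_id x).prodMk (hφ t))
    have h2 := ((ht.hasFDerivAt.sub hb.hasFDerivAt).mul h).fderiv
    have h3 : pd3 j (fun y => (φt y - φb y) * F j (y, tentPhi φb φt y t)) x = _ :=
      congrArg (fun L => L (Pi.single j 1)) h2
    rw [h3, (hφ t).fderiv]
    have hsplit : ∀ c : ℝ, fderiv ℝ (F j) (x, tentPhi φb φt x t) (Pi.single j 1, c)
        = fderiv ℝ (F j) (x, tentPhi φb φt x t) (Pi.single j 1, 0)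
          + c * fderiv ℝ (F j) (x, tentPhi φb φt x t) (0, 1) := by
      intro c
      rw [← smul_eq_mul, ← map_smul, ← map_add]
      simp
    simp
    rw [hsplit]
    exact Or.inl rfl
  have hmain := ((hcomp G hG).sub (HasDerivAt.fun_sum (u := Finset.univ)
    fun j _ => (hcomp (F j) (hF j)).mul (hgs j))).deriv
  have hmain' : deriv (fun s => G (x, tentPhi φb φt x s) - ∑ j : Fin 3, F j (x, tentPhi φb φt x s)
        * fderiv ℝ (fun y => tentPhi φb φt y s) x (Pi.single j 1)) t = _ := hmain
  rw [hmain', htime]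
  simp only [hspace, hdiv, Fin.sum_univ_three]
  ring

/-- If `u = (E, H)` is a `C¹` solution of the Maxwell system `∂ₜ(εE) = ∇×H`,
`∂ₜ(μH) = −∇×E` on the open tent `K°` over an open set `ω` (with `C²` fronts
`φ_b < φ_t`), then the pullback `û = u ∘ Φ` satisfies the transformed equation
`∂_{t̂}( g(û) − f(û)∇_xφ ) + div_x( δ f(û) ) = 0` on `ω × (0,1)`, row-wise. -/
theorem maxwell_mapped_tent_equation (ε μ : ℝ) (hε : 0 < ε) (hμ : 0 < μ)
    (ω : Set (Fin 3 → ℝ)) (hω : IsOpen ω)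
    (φb φt : (Fin 3 → ℝ) → ℝ)
    (hb : ∀ x ∈ ω, ContDiffAt ℝ 2 φb x)
    (ht : ∀ x ∈ ω, ContDiffAt ℝ 2 φt x)
    (hlt : ∀ x ∈ ω, φb x < φt x)
    (E H : (Fin 3 → ℝ) × ℝ → (Fin 3 → ℝ))
    (hEreg : ∀ p : (Fin 3 → ℝ) × ℝ,
      p.1 ∈ ω → φb p.1 < p.2 → p.2 < φt p.1 → ContDiffAt ℝ 1 E p)
    (hHreg : ∀ p : (Fin 3 → ℝ) × ℝ,
      p.1 ∈ ω → φb p.1 < p.2 → p.2 < φt p.1 → ContDiffAt ℝ 1 H p)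
    (hMaxwell : ∀ (x : Fin 3 → ℝ) (t : ℝ), x ∈ ω → φb x < t → t < φt x →
      ∀ i : Fin 3,
        deriv (fun s => ε * E (x, s) i) t = curl3 (fun y => H (y, t)) x i ∧
        deriv (fun s => μ * H (x, s) i) t = -curl3 (fun y => E (y, t)) x i) :
    ∀ x ∈ ω, ∀ t ∈ Set.Ioo (0 : ℝ) 1, ∀ r : Fin 6,
      deriv (fun s =>
          gvec ε μ (E (x, tentPhi φb φt x s)) (H (x, tentPhi φb φt x s)) r
            - ∑ j : Fin 3,
                fmat (E (x, tentPhi φb φt x s)) (H (x, tentPhi φb φt x s)) r j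
                  * fderiv ℝ (fun y => tentPhi φb φt y s) x (Pi.single j 1)) t
        + ∑ j : Fin 3, pd3 j (fun y =>
            (φt y - φb y)
              * fmat (E (y, tentPhi φb φt y t)) (H (y, tentPhi φb φt y t)) r j) x
        = 0 := by
  intro x hx t htt r
  have hδ := hlt x hx
  have h1 : φb x < tentPhi φb φt x t := by
    unfold tentPhi
    nlinarith [htt.1, htt.2]
  have h2 : tentPhi φb φt x t < φt x := by
    unfold tentPhi
    nlinarith [htt.1, htt.2]
  have hE : ∀ i, DifferentiableAt ℝ (fun p => E p i) (x, tentPhi φb φt x t) :=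
    differentiableAt_pi.1 ((hEreg (x, _) hx h1 h2).differentiableAt (by simp))
  have hH : ∀ i, DifferentiableAt ℝ (fun p => H p i) (x, tentPhi φb φt x t) :=
    differentiableAt_pi.1 ((hHreg (x, _) hx h1 h2).differentiableAt (by simp))
  have key := scalar_mapped_tent φb φt x t ((hb x hx).differentiableAt (by simp))
    ((ht x hx).differentiableAt (by simp)) (fun p => gvec ε μ (E p) (H p) r)
    (fun j p => fmat (E p) (H p) r j)
  refine (key ?_ ?_).trans ?_
  · refine Fin.addCases (m := 3) (n := 3) (fun i => ?_) (fun i => ?_) r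
    · simp only [gvec, Fin.append_left]
      exact (hE i).const_mul ε
    · simp only [gvec, Fin.append_right]
      exact (hH i).const_mul μ
  · intro j
    refine Fin.addCases (m := 3) (n := 3) (fun i => ?_) (fun i => ?_) r
    · simp only [fmat, Fin.append_left]
      fin_cases i <;> fin_cases j <;> simp [skew3, hH]
    · simp only [fmat, Fin.append_right]
      fin_cases i <;> fin_cases j <;> simp [skew3, hE]
  · refine mul_eq_zero_of_right _ ?_
    have hM := hMaxwell x _ hx h1 h2
    refine Fin.addCases (m := 3) (n := 3) (fun i => ?_) (fun i => ?_) r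
    · simp only [gvec, fmat, Fin.append_left]
      rw [(hM i).1]
      fin_cases i <;> simp [skew3, curl3, pd3, Fin.sum_univ_three] <;> ring
    · simp only [gvec, fmat, Fin.append_right]
      rw [(hM i).2]
      fin_cases i <;> simp [skew3, curl3, pd3, Fin.sum_univ_three] <;> ring
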